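/- arXiv:2212.05267 — 6 statements merged into one kernel-verified Lean document; each statement's English description precedes it below -/
import Mathlib

section
/- Let n be a natural number and let T : Fin n → Fin n → Fin n → Fin n → ℝ be an algebraic curvature tensor, i.e. T i j k l = -T j i k l, T i j k l = -T i j l k, T i j k l = T k l i j for all indices, and T satisfies the first Bianchi identity T i j k l + T i k l j + T i l j k = 0. Let A, B : Matrix (Fin n) (Fin n) ℝ be symmetric matrices. Define the action of T on A as the second kind by (T̂A) i k = ∑_{j,l} T i j l k * A j l, and define the Kulkarni–Nomizu product (A ⊙ B) i j k l = A i k * B j l + A j l * B i k − A i l * B j k − A j k * B i l. Then ∑_{i,k} (T̂A) i k * B i k = −(1/4) ∑_{i,j,k,l} T i j k l * (A ⊙ B) i j k l. -/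
open Matrix

/-- Lemma 2.1: for an algebraic curvature tensor `T` and symmetric matrices `A`, `B`,
`⟨T̂A, B⟩ = -⟨T, A ⊙ B⟩`. -/
theorem second_kind_kulkarni_nomizu (n : ℕ) (T : Fin n → Fin n → Fin n → Fin n → ℝ)
    (hT1 : ∀ i j k l, T i j k l = -T j i k l)
    (hT2 : ∀ i j k l, T i j k l = -T i j l k)
    (hT3 : ∀ i j k l, T i j k l = T k l i j)
    (hBianchi : ∀ i j k l, T i j k l + T i k l j + T i l j k = 0)
    (A B : Matrix (Fin n) (Fin n) ℝ)
    (hA : Aᵀ = A) (hB : Bᵀ = B) :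
    (∑ i, ∑ k, (∑ j, ∑ l, T i j l k * A j l) * B i k) =
      -(1/4) * ∑ i, ∑ j, ∑ k, ∑ l, T i j k l *
        (A i k * B j l + A j l * B i k - A i l * B j k - A j k * B i l) := by
  have e1 : ∑ i, ∑ j, ∑ k, ∑ l, T i j k l * (A i k * B j l) =
      ∑ i, ∑ j, ∑ k, ∑ l, T i j k l * (A j l * B i k) := by
    rw [Finset.sum_comm]
    refine Finset.sum_congr rfl fun i _ => Finset.sum_congr rfl fun j _ => ?_
    rw [Finset.sum_comm]
    refine Finset.sum_congr rfl fun k _ => Finset.sum_congr rfl fun l _ => ?_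
    rw [hT1 j i l k, hT2 i j l k, neg_neg]
  have e3 : ∑ i, ∑ j, ∑ k, ∑ l, T i j k l * (A i l * B j k) =
      -∑ i, ∑ j, ∑ k, ∑ l, T i j k l * (A j l * B i k) := by
    rw [Finset.sum_comm]
    simp only [← Finset.sum_neg_distrib]
    refine Finset.sum_congr rfl fun i _ => Finset.sum_congr rfl fun j _ => ?_
    refine Finset.sum_congr rfl fun k _ => Finset.sum_congr rfl fun l _ => ?_
    rw [hT1 j i k l, neg_mul]
  have e4 : ∑ i, ∑ j, ∑ k, ∑ l, T i j k l * (A j k * B i l) =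
      -∑ i, ∑ j, ∑ k, ∑ l, T i j k l * (A j l * B i k) := by
    simp only [← Finset.sum_neg_distrib]
    refine Finset.sum_congr rfl fun i _ => Finset.sum_congr rfl fun j _ => ?_
    rw [Finset.sum_comm]
    refine Finset.sum_congr rfl fun k _ => Finset.sum_congr rfl fun l _ => ?_
    rw [hT2 i j l k, neg_mul]
  have e0 : (∑ i, ∑ k, (∑ j, ∑ l, T i j l k * A j l) * B i k) =
      -∑ i, ∑ j, ∑ k, ∑ l, T i j k l * (A j l * B i k) := by
    simp only [← Finset.sum_neg_distrib, Finset.sum_mul]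
    refine Finset.sum_congr rfl fun i _ => ?_
    rw [Finset.sum_comm]
    refine Finset.sum_congr rfl fun j _ => ?_
    refine Finset.sum_congr rfl fun k _ => Finset.sum_congr rfl fun l _ => ?_
    rw [hT2 i j l k]
    ring
  rw [e0]
  simp only [mul_add, mul_sub, Finset.sum_add_distrib, Finset.sum_sub_distrib]
  rw [e1, e3, e4]
  ring
end

section
/- Let a, b, c be real numbers with a ≥ b ≥ c and a + b + c = 0. Then a * b * c ≤ (Real.sqrt 6 / 18) * (a^2 + b^2 + c^2)^(3/2), and equality holds if and only if b = c (equivalently, b = c = -a/2). -/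
/-- Inequality (2.9): for `a ≥ b ≥ c` summing to zero,
`abc ≤ (√6/18)(a²+b²+c²)^{3/2}`, with equality iff `b = c`. -/
theorem det_bound_scalar (a b c : ℝ) (hab : a ≥ b) (hbc : b ≥ c)
    (hsum : a + b + c = 0) :
    a * b * c ≤ (Real.sqrt 6 / 18) * (a ^ 2 + b ^ 2 + c ^ 2) ^ ((3 : ℝ) / 2) ∧
    (a * b * c = (Real.sqrt 6 / 18) * (a ^ 2 + b ^ 2 + c ^ 2) ^ ((3 : ℝ) / 2) ↔ b = c) := by
  have hS : 0 ≤ a ^ 2 + b ^ 2 + c ^ 2 := by positivity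
  have hR : 0 ≤ (Real.sqrt 6 / 18) * (a ^ 2 + b ^ 2 + c ^ 2) ^ ((3 : ℝ) / 2) := by positivity
  have hR2 : ((Real.sqrt 6 / 18) * (a ^ 2 + b ^ 2 + c ^ 2) ^ ((3 : ℝ) / 2)) ^ 2
      = (a ^ 2 + b ^ 2 + c ^ 2) ^ 3 / 54 := by
    have h1 : ((a ^ 2 + b ^ 2 + c ^ 2) ^ ((3 : ℝ) / 2)) ^ 2 = (a ^ 2 + b ^ 2 + c ^ 2) ^ 3 := by
      rw [← Real.rpow_natCast, ← Real.rpow_mul hS, ← Real.rpow_natCast]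
      norm_num
    rw [mul_pow, h1, div_pow, Real.sq_sqrt (by norm_num)]
    ring
  generalize (Real.sqrt 6 / 18) * (a ^ 2 + b ^ 2 + c ^ 2) ^ ((3 : ℝ) / 2) = R at hR hR2 ⊢
  have ha : a = -b - c := by linarith
  have key : R ^ 2 - (a * b * c) ^ 2 = ((a - b) * (b - c) * (c - a)) ^ 2 / 27 := by
    rw [hR2, ha]
    ring
  refine ⟨abs_le_of_sq_le_sq' (by nlinarith [sq_nonneg ((a - b) * (b - c) * (c - a))]) hR |>.2,
    ?_, ?_⟩
  · intro h
    rw [h] at key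
    have h0 : (a - b) * (b - c) * (c - a) = 0 := by
      apply pow_eq_zero_iff (two_ne_zero) |>.1
      linarith
    rcases mul_eq_zero.1 h0 with h1 | h1
    · rcases mul_eq_zero.1 h1 with h2 | h2
      · have hb : a = b := by linarith
        have hc : c = -2 * b := by linarith
        have hb0 : 0 ≤ b := by linarith
        have h3 : b ^ 3 ≤ 0 := by
          rw [hb, hc] at h
          nlinarith
        have h4 : b ^ 3 = 0 := le_antisymm h3 (by positivity)
        have h5 : b = 0 := by simpa using h4
        linarith
      · linarith
    · linarith
  · intro h
    subst h
    have ha0 : 0 ≤ a := by linarith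
    have h1 : 0 ≤ a * b * b := by rw [mul_assoc]; exact mul_nonneg ha0 (mul_self_nonneg b)
    have h2 : (a * b * b) ^ 2 = R ^ 2 := by
      have : ((a - b) * (b - b) * (b - a)) ^ 2 = 0 := by ring
      rw [this] at key
      linarith
    exact (pow_left_inj₀ h1 hR two_ne_zero).1 h2
end

section
/- Let A be a real symmetric 3 × 3 matrix (A : Matrix (Fin 3) (Fin 3) ℝ with Aᵀ = A) whose trace is zero. Then det A ≤ (Real.sqrt 6 / 18) * (∑_{i,j} (A i j)^2)^(3/2). -/
open Matrix

/-- Matrix form of inequality (2.9): a trace-free real symmetric 3×3 matrix satisfies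
`det A ≤ (√6/18)‖A‖³` (Frobenius norm). -/
theorem det_bound_matrix (A : Matrix (Fin 3) (Fin 3) ℝ)
    (hA : Aᵀ = A) (htr : A.trace = 0) :
    A.det ≤ (Real.sqrt 6 / 18) * (∑ i, ∑ j, (A i j) ^ 2) ^ ((3 : ℝ) / 2) := by
  have hH : A.IsHermitian := by
    rw [Matrix.IsHermitian, Matrix.conjTranspose_eq_transpose_of_trivial]
    exact hA
  have hd := hH.det_eq_prod_eigenvalues
  have ht := hH.trace_eq_sum_eigenvalues
  have hc := congrArg (Polynomial.eval 1) hH.charpoly_eq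
  rw [Matrix.eval_charpoly] at hc
  have h10 : A 1 0 = A 0 1 := congrFun (congrFun hA 0) 1
  have h20 : A 2 0 = A 0 2 := congrFun (congrFun hA 0) 2
  have h21 : A 2 1 = A 1 2 := congrFun (congrFun hA 1) 2
  set S := ∑ i, ∑ j, (A i j) ^ 2 with hS
  have hS0 : 0 ≤ S := by positivity
  generalize hH.eigenvalues = e at hd ht hc
  rw [htr] at ht
  rw [Matrix.trace_fin_three] at htr
  have hd' := hd
  rw [Matrix.det_fin_three] at hd'
  rw [Matrix.det_fin_three] at hc
  simp [Fin.prod_univ_three, Fin.sum_univ_three, h10, h20, h21] at hd hd' ht hc hS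
  generalize e 0 = x at *
  generalize e 1 = y at *
  generalize e 2 = z at *
  have hz : z = -x - y := by linarith
  have ha : A 2 2 = -A 0 0 - A 1 1 := by linarith
  have hSe : S = x ^ 2 + y ^ 2 + z ^ 2 := by
    rw [hS]
    rw [ha] at hc hd' ⊢
    rw [hz] at hc hd' ⊢
    linarith
  have key : 54 * A.det ^ 2 ≤ S ^ 3 := by
    rw [hd, hSe, hz]
    nlinarith [sq_nonneg ((x - y) * (2 * x + y) * (x + 2 * y))]
  have hp : (S ^ ((3 : ℝ) / 2)) ^ 2 = S ^ 3 := by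
    rw [← Real.rpow_natCast, ← Real.rpow_mul hS0, ← Real.rpow_natCast]
    norm_num
  refine le_of_abs_le (abs_le_of_sq_le_sq ?_ (by positivity))
  rw [mul_pow, hp, div_pow, Real.sq_sqrt (by norm_num)]
  linarith
end

section
/- Let A be a real symmetric 3 × 3 matrix (A : Matrix (Fin 3) (Fin 3) ℝ with Aᵀ = A) whose trace is zero. Then det A = (Real.sqrt 6 / 18) * (∑_{i,j} (A i j)^2)^(3/2) holds if and only if there exists a real number t ≥ 0 such that the characteristic polynomial of A equals (X − t) * (X + t/2)^2, i.e. the eigenvalues of A are t, −t/2, −t/2. -/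
open Matrix

open Polynomial

lemma aux_charpoly (A : Matrix (Fin 3) (Fin 3) ℝ)
    (hA : Aᵀ = A) (htr : A.trace = 0) :
    A.charpoly = X ^ 3 - C ((∑ i, ∑ j, (A i j) ^ 2) / 2) * X - C A.det := by
  have h10 : A 1 0 = A 0 1 := congrFun (congrFun hA 0) 1
  have h20 : A 2 0 = A 0 2 := congrFun (congrFun hA 0) 2
  have h21 : A 2 1 = A 1 2 := congrFun (congrFun hA 1) 2
  have h22 : A 2 2 = - A 0 0 - A 1 1 := by
    rw [Matrix.trace_fin_three] at htr
    linarith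
  apply Polynomial.funext
  intro r
  rw [Matrix.eval_charpoly, Matrix.det_fin_three, Matrix.det_fin_three]
  simp [Fin.sum_univ_three, h10, h20, h21, h22]
  ring

lemma aux_pow (t : ℝ) (ht : 0 ≤ t) :
    (Real.sqrt 6 / 18) * (3 * t ^ 2 / 2) ^ ((3 : ℝ) / 2) = t ^ 3 / 4 := by
  have h6 : Real.sqrt 6 ^ 2 = 6 := Real.sq_sqrt (by norm_num)
  have h : 3 * t ^ 2 / 2 = (Real.sqrt 6 / 2 * t) ^ (2 : ℝ) := by
    rw [Real.rpow_two]
    linear_combination (-t ^ 2 / 4) * h6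
  rw [h, ← Real.rpow_mul (by positivity)]
  norm_num
  linear_combination (t ^ 3 / 144 * (Real.sqrt 6 ^ 2 + 6)) * h6

/-- Equality case of inequality (2.9) in matrix form: equality holds iff the eigenvalues
of `A` are `t, -t/2, -t/2` for some `t ≥ 0`. -/
theorem det_bound_matrix_equality (A : Matrix (Fin 3) (Fin 3) ℝ)
    (hA : Aᵀ = A) (htr : A.trace = 0) :
    A.det = (Real.sqrt 6 / 18) * (∑ i, ∑ j, (A i j) ^ 2) ^ ((3 : ℝ) / 2) ↔
      ∃ t : ℝ, 0 ≤ t ∧ A.charpoly = (X - C t) * (X + C (t / 2)) ^ 2 := by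
  rw [aux_charpoly A hA htr]
  have hS : 0 ≤ ∑ i, ∑ j, (A i j) ^ 2 :=
    Finset.sum_nonneg fun i _ => Finset.sum_nonneg fun j _ => sq_nonneg _
  generalize (∑ i, ∑ j, (A i j) ^ 2) = S at hS ⊢
  generalize A.det = D
  constructor
  · intro h
    have ht : Real.sqrt (2 * S / 3) ^ 2 = 2 * S / 3 := Real.sq_sqrt (by positivity)
    have ht0 := Real.sqrt_nonneg (2 * S / 3)
    generalize Real.sqrt (2 * S / 3) = t at ht ht0
    have hS' : S = 3 * t ^ 2 / 2 := by linarith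
    refine ⟨t, ht0, ?_⟩
    rw [hS', aux_pow t ht0] at h
    apply Polynomial.funext
    intro r
    rw [h, hS']
    simp
    ring
  · rintro ⟨t, ht0, h⟩
    have h0 := congrArg (Polynomial.eval 0) h
    have h1 := congrArg (Polynomial.eval 1) h
    simp at h0 h1
    have hD : D = t ^ 3 / 4 := by linarith
    have hS' : S = 3 * t ^ 2 / 2 := by
      rw [hD] at h1
      linarith
    rw [hS', aux_pow t ht0, hD]
end

section
/- Let λ a : Fin 3 → ℝ with ∑ i, λ i = 0 and a i ≥ 0 for every i. Then ∑ i, λ i * a i ≤ (Real.sqrt 6 / 3) * Real.sqrt (∑ i, (λ i)^2) * (∑ i, a i). -/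
/-- Core optimization inequality in Lemma 3.2: for `λ` summing to zero and
nonnegative weights `a`, `⟨λ, a⟩ ≤ (√6/3)|λ|(∑ a)`. -/
theorem weighted_eigenvalue_bound (l a : Fin 3 → ℝ)
    (hl : ∑ i, l i = 0) (ha : ∀ i, 0 ≤ a i) :
    ∑ i, l i * a i ≤
      (Real.sqrt 6 / 3) * Real.sqrt (∑ i, (l i) ^ 2) * (∑ i, a i) := by
  have key : ∀ i, l i ≤ (Real.sqrt 6 / 3) * Real.sqrt (∑ i, (l i) ^ 2) := by
    intro i
    have hS : 0 ≤ ∑ i, (l i) ^ 2 := Finset.sum_nonneg fun i _ => sq_nonneg _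
    refine le_of_abs_le (abs_le_of_sq_le_sq ?_ (by positivity))
    rw [mul_pow, div_pow, Real.sq_sqrt hS, Real.sq_sqrt (by norm_num)]
    rw [Fin.sum_univ_three] at hl ⊢
    have h2 : l 2 = -l 0 - l 1 := by linarith
    fin_cases i <;> simp only [Fin.zero_eta, Fin.mk_one, Fin.reduceFinMk, h2]
    · nlinarith [sq_nonneg (l 0 + 2 * l 1)]
    · nlinarith [sq_nonneg (l 1 + 2 * l 0)]
    · nlinarith [sq_nonneg (l 0 - l 1)]
  rw [Finset.mul_sum]
  exact Finset.sum_le_sum fun i _ => mul_le_mul_of_nonneg_right (key i) (ha i)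
end

section
/- Let λ a : Fin 3 → ℝ with λ 0 ≥ λ 1 ≥ λ 2, ∑ i, λ i = 0, λ ≠ 0, a i ≥ 0 for every i, and a ≠ 0. Then equality ∑ i, λ i * a i = (Real.sqrt 6 / 3) * Real.sqrt (∑ i, (λ i)^2) * (∑ i, a i) holds if and only if a 1 = 0, a 2 = 0, and λ 1 = λ 2 = −(λ 0)/2. -/
/-- Equality case of the core optimization inequality in Lemma 3.2. -/
theorem weighted_eigenvalue_bound_equality (l a : Fin 3 → ℝ)
    (h01 : l 0 ≥ l 1) (h12 : l 1 ≥ l 2) (hl : ∑ i, l i = 0) (hlne : l ≠ 0)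
    (ha : ∀ i, 0 ≤ a i) (hane : a ≠ 0) :
    (∑ i, l i * a i =
        (Real.sqrt 6 / 3) * Real.sqrt (∑ i, (l i) ^ 2) * (∑ i, a i)) ↔
      (a 1 = 0 ∧ a 2 = 0 ∧ l 1 = -(l 0) / 2 ∧ l 2 = -(l 0) / 2) := by
  have a0 := ha 0
  have a1 := ha 1
  have a2 := ha 2
  have hx : 0 < l 0 := by
    by_contra hc
    apply hlne
    rw [Fin.sum_univ_three] at hl
    funext i
    fin_cases i <;> simp <;> linarith
  have hane' : ¬ (a 0 = 0 ∧ a 1 = 0 ∧ a 2 = 0) := by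
    rintro ⟨h0, h1, h2⟩
    apply hane
    funext i
    fin_cases i <;> simpa
  have hK0 : 0 ≤ (Real.sqrt 6 / 3) * Real.sqrt (∑ i, (l i) ^ 2) := by positivity
  have hK2 : ((Real.sqrt 6 / 3) * Real.sqrt (∑ i, (l i) ^ 2)) ^ 2
      = 2 / 3 * (∑ i, (l i) ^ 2) := by
    rw [mul_pow, div_pow, Real.sq_sqrt (by norm_num), Real.sq_sqrt (by positivity)]
    norm_num
  generalize (Real.sqrt 6 / 3) * Real.sqrt (∑ i, (l i) ^ 2) = K at *
  simp only [Fin.sum_univ_three] at *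
  generalize l 0 = x at *
  generalize l 1 = y at *
  generalize l 2 = z at *
  have hz : x = -(y + z) := by linarith
  have hd : K ^ 2 - x ^ 2 = (y - z) ^ 2 / 3 := by
    rw [hK2, hz]; ring
  have hKx : x ≤ K := by
    refine (abs_le_of_sq_le_sq' ?_ hK0).2
    nlinarith [sq_nonneg (y - z)]
  constructor
  · intro h
    have hKy : y < K := by
      by_contra hc
      have e1 : K = x := by linarith
      have e2 : x = y := by linarith
      have : (y - z) ^ 2 = 0 := by rw [e1] at hd; linarith
      have := pow_eq_zero_iff (two_ne_zero) |>.mp this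
      linarith
    have p0 := mul_nonneg (sub_nonneg.2 hKx) a0
    have p1 := mul_nonneg (sub_nonneg.2 hKy.le) a1
    have p2 := mul_nonneg (sub_nonneg.2 (h12.le.trans hKy.le)) a2
    have q0 : (K - x) * a 0 = 0 := by nlinarith
    have q1 : (K - y) * a 1 = 0 := by nlinarith
    have q2 : (K - z) * a 2 = 0 := by nlinarith
    have r1 : a 1 = 0 := (mul_eq_zero.1 q1).resolve_left (by linarith)
    have r2 : a 2 = 0 := (mul_eq_zero.1 q2).resolve_left (by intro; linarith)
    have r0 : K - x = 0 := (mul_eq_zero.1 q0).resolve_right (fun h => hane' ⟨h, r1, r2⟩)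
    have e1 : K = x := by linarith
    have : (y - z) ^ 2 = 0 := by rw [e1] at hd; linarith
    have := pow_eq_zero_iff (two_ne_zero) |>.mp this
    refine ⟨r1, r2, ?_, ?_⟩ <;> linarith
  · rintro ⟨r1, r2, e1, e2⟩
    have : K = x := by
      have : K ^ 2 = x ^ 2 := by rw [e1, e2] at hd; linarith
      exact (pow_left_inj₀ hK0 hx.le two_ne_zero).1 this
    rw [r1, r2, this]; ring
end
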